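/- Let ∞ ≥ p > q ≥ 1 and v, w be positive weight functions on an index set I. Set β = 1/q − 1/p > 0. If ∑_{i ∈ I} (v(i)/w(i))^{1/β} < ∞, then ℓ^p_w(I) is continuously embedded into ℓ^q_v(I), and the embedding is compact. -/

import Mathlib

open MeasureTheory ENNReal

/-!
Put `r = (1/q - 1/p)⁻¹`, so that `1/q = 1/r + 1/p`. The summability hypothesis says that the
multiplier `a = v / w` lies in `ℓ^r`, and Hölder's inequality makes the product a bounded bilinear
map `ℓ^r × ℓ^p → ℓ^q`; the embedding is `T = (a * ·)`.
Since `r < ∞`, the finitely supported truncations of `a` converge to `a` in `ℓ^r`, so by continuity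
of the product in its first variable the corresponding multiplication operators converge to `T` in
operator norm. They have finite rank, hence `T` is compact.
-/

/-- Pairing coordinatewise with a sequence in `ℓ^r`, `r < ∞`, through uniformly bounded bilinear
forms `B i`, is compact from `ℓ^p` to `ℓ^q` when `1/q = 1/r + 1/p`: it is a sum, convergent in
operator norm, of operators of rank at most one. -/
lemma isCompactOperator_holderL {I : Type*} {r p q : ℝ≥0∞} [Fact (1 ≤ r)] [Fact (1 ≤ p)]
    [Fact (1 ≤ q)] [r.HolderTriple p q] (hr : r ≠ ∞)
    (B : ∀ _ : I, ℂ →L[ℂ] ℂ →L[ℂ] ℂ) {K : NNReal} (hB : ∀ i, ‖B i‖ ≤ K)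
    (a : lp (fun _ : I => ℂ) r) :
    IsCompactOperator (lp.holderL (p := r) (q := p) q B hB a) := by
  classical
  have hs := (lp.hasSum_single hr a).mapL (lp.holderL (p := r) (q := p) q B hB)
  refine isCompactOperator_of_tendsto hs (.of_forall fun s => ?_)
  refine (compactOperator (RingHom.id ℂ) (lp (fun _ : I => ℂ) p)
    (lp (fun _ : I => ℂ) q)).sum_mem fun i _ => ?_
  -- The operator of index `i` factors through the `i`-th coordinate, that is, through `ℂ`.
  have hc : IsCompactOperator (lp.evalCLM ℂ (fun _ : I => ℂ) p i) :=
    isCompactOperator_of_locallyCompactSpace_dom _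
  have h1 := hc.clm_comp ((lp.singleContinuousLinearMap ℂ (fun _ : I => ℂ) q i).comp (B i (a i)))
  refine (congrArg IsCompactOperator ?_).mp h1
  funext f
  ext j
  change lp.single (E := fun _ : I => ℂ) q i (B i (a i) (f i)) j =
    B j (lp.single (E := fun _ : I => ℂ) r i (a i) j) (f j)
  rcases eq_or_ne j i with rfl | hj
  · simp
  · simp [hj]

/-- Let `∞ ≥ p > q ≥ 1` and `v, w` positive weights on `I`, and set
`β = 1/q − 1/p > 0`. If `∑_i (v i / w i)^(1/β) < ∞` then `ℓ^p_w(I)` is continuously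
embedded into `ℓ^q_v(I)` and the embedding is compact. Via the isometric identifications
`ℓ^p_w ≅ ℓ^p`, `ℓ^q_v ≅ ℓ^q`, the embedding is the diagonal operator with multiplier
`v/w`; the conclusion asserts its existence as a bounded operator and its compactness. -/
theorem weighted_lp_embedding_compact_of_summable
    {I : Type*} (p q : ℝ≥0∞) [Fact (1 ≤ p)] [Fact (1 ≤ q)] (hq : 1 ≤ q) (hqp : q < p)
    (w v : I → ℝ) (hw : ∀ i, 0 < w i) (hv : ∀ i, 0 < v i)
    (hsum : Summable fun i => (v i / w i) ^ (1 / (q⁻¹ - p⁻¹).toReal)) :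
    ∃ T : lp (fun _ : I => ℂ) p →L[ℂ] lp (fun _ : I => ℂ) q,
      (∀ (f : lp (fun _ : I => ℂ) p) (i : I), (T f : ∀ _ : I, ℂ) i = (v i / w i : ℝ) * f i) ∧
      IsCompactOperator T := by
  set r : ℝ≥0∞ := (q⁻¹ - p⁻¹)⁻¹ with hrdef
  have hlt : p⁻¹ < q⁻¹ := ENNReal.inv_lt_inv.2 hqp
  have hr : r ≠ ∞ := ENNReal.inv_ne_top.2 (tsub_pos_of_lt hlt).ne'
  have hr1 : 1 ≤ r := by
    rw [hrdef, ENNReal.one_le_inv]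
    exact tsub_le_self.trans (ENNReal.inv_le_one.2 hq)
  have : Fact (1 ≤ r) := ⟨hr1⟩
  have : r.HolderTriple p q := ⟨by rw [hrdef, inv_inv, tsub_add_cancel_of_le hlt.le]⟩
  have hmem : Memℓp (fun i => ((v i / w i : ℝ) : ℂ)) r := by
    refine memℓp_gen (hsum.congr fun i => ?_)
    rw [Complex.norm_real, Real.norm_of_nonneg (div_pos (hv i) (hw i)).le, hrdef,
      ENNReal.toReal_inv, one_div]
  have hB : ∀ _ : I, ‖ContinuousLinearMap.mul ℂ ℂ‖ ≤ (1 : NNReal) :=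
    fun _ => ContinuousLinearMap.opNorm_mul_le ℂ ℂ
  exact ⟨lp.holderL (p := r) (q := p) q (fun _ => ContinuousLinearMap.mul ℂ ℂ) hB ⟨_, hmem⟩,
    fun f i => rfl, isCompactOperator_holderL hr _ hB _⟩
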